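/- arXiv:1111.7106 — 2 statements merged into one kernel-verified Lean document; each statement's English description precedes it below -/
import Mathlib

section
/- Let X¹ and X² be càdlàg functions from [0,∞) to ℝⁿ such that X² − X¹ is coordinatewise nonnegative and nondecreasing. Let (W¹, L¹) and (W², L²) be solution pairs of the Skorohod problem for X¹ and for X², respectively, and define X³ = X¹ + R·L². Then L¹ − L² is coordinatewise nonnegative and nondecreasing, satisfies L¹(t) − L²(t) ≤ R⁻¹(X²(t) − X¹(t)) for all t ≥ 0, and the pair (W¹, L¹ − L²) is a solution pair of the Skorohod problem for X³. -/
/-!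
The proof compares Stieltjes measures on `(-∞, T]`, all functions being extended by zero to negative
times, so that initial values become atoms at `0`. Let `Y = W₂ - W₁ = D - (1 - Pᵗ)(L₁ - L₂)` with
`D = X₂ - X₁`, and let `m i` be the mass of the negative part of the signed measure
`dL₁ i - dL₂ i` on `(-∞, T]`.

* The negative part of a right-continuous difference of monotone functions satisfies
  `(Y i)⁻(T) ≤ -∫_C dY i` for every measurable `C` with `{Y i < 0} ⊆ C ⊆ {Y i ≤ 0}`
  (`negPart_le`). This rests on `measure_le_of_contact`: if `G ≥ B`, then `dG ≤ dB` on `{G = B}`.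
* By complementarity `dL₁ i` does not charge `{Y i < 0}`, where `W₁ i > 0`, and `dL₂ i` does not
  charge `{Y i > 0}`, where `W₂ i > 0`. Hence, adding to `{Y i < 0}` the part of a Hahn set of
  `dL₁ i - dL₂ i` on which `Y i ≤ 0`, one obtains a set `C` with `(dL₁ i - dL₂ i)(C) ≤ -m i`.
* As `dD ≥ 0` and `P ≥ 0`, these two facts give `m i + (Y i)⁻(T) ≤ ∑ j, P j i * m j`. So
  `m ≤ Pᵗ m ≤ (Pᵗ)ᵏ m → 0`, whence `m = 0` and `Y ≥ 0` (`regulator_comparison`).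

Thus `L₁ - L₂` is nonnegative and nondecreasing, `d(L₁ - L₂) ≤ dL₁` inherits the complementarity
condition with `W₁`, and `W₁ ≤ W₂` becomes `L₁ - L₂ ≤ R⁻¹ D`, again by iterating `Pᵗ`
(`nonpos_of_le_mulVec`).
-/

open MeasureTheory Filter Topology

open Classical in
noncomputable def lsMeasure (f : ℝ → ℝ) : Measure ℝ :=
  if h : Monotone f ∧ ∀ x, ContinuousWithinAt f (Set.Ici x) x then
    StieltjesFunction.measure ⟨f, h.1, h.2⟩
  else 0

noncomputable def extZero (f : ℝ → ℝ) : ℝ → ℝ := fun t => if t < 0 then 0 else f t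

def Cadlag {n : ℕ} (X : ℝ → Fin n → ℝ) : Prop :=
  (∀ t : ℝ, 0 ≤ t → ContinuousWithinAt X (Set.Ici t) t) ∧
  (∀ t : ℝ, 0 < t → ∃ l : Fin n → ℝ, Filter.Tendsto X (nhdsWithin t (Set.Iio t)) (nhds l))

structure IsSolutionPair {n : ℕ} (R : Matrix (Fin n) (Fin n) ℝ)
    (X W L : ℝ → Fin n → ℝ) : Prop where
  eqn : ∀ t : ℝ, 0 ≤ t → W t = X t + R.mulVec (L t)
  nonnegL : ∀ (i : Fin n) (t : ℝ), 0 ≤ t → 0 ≤ L t i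
  monoL : ∀ i : Fin n, MonotoneOn (fun t => L t i) (Set.Ici (0 : ℝ))
  rcL : ∀ (i : Fin n) (t : ℝ), 0 ≤ t → ContinuousWithinAt (fun s => L s i) (Set.Ici t) t
  nonnegW : ∀ (i : Fin n) (t : ℝ), 0 ≤ t → 0 ≤ W t i
  flat : ∀ i : Fin n, lsMeasure (extZero fun t => L t i) {t : ℝ | 0 ≤ t ∧ 0 < W t i} = 0

/-! ### Stieltjes measures on contact sets -/

/-- If `G ≥ B` are Stieltjes functions, then `dG ≤ dB` on the contact set `{G = B}`: the increment
of `G` over an interval `(a, t]` whose right end `t` lies in the contact set is at most that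
of `B`. -/
lemma measure_le_of_contact (G B : StieltjesFunction ℝ) (hBG : ∀ x, B x ≤ G x) (E : Set ℝ)
    (hE : ∀ x ∈ E, G x ≤ B x) : G.measure E ≤ B.measure E := by
  have key : ∀ s, G.measure (s ∩ E) ≤ B.length s := by
    intro s
    rw [StieltjesFunction.length_eq]
    refine le_iInf fun a => le_iInf fun b => le_iInf fun hs => ?_
    have hs' : s ⊆ Set.Ioc a b := by
      intro x hx
      refine hs ⟨hx, fun hbot => ?_⟩
      have := hbot (x - 1)
      linarith
    rcases (s ∩ E).eq_empty_or_nonempty with he | hne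
    · simp [he]
    have hbdd : BddAbove (s ∩ E) := ⟨b, fun x hx => (hs' hx.1).2⟩
    have hlub := isLUB_csSup hne hbdd
    obtain ⟨u, hu_mono, -, hu_lim, hu_mem⟩ := hlub.exists_seq_monotone_tendsto hne
    have inc : ∀ t ∈ s ∩ E, G.measure (Set.Ioc a t) ≤ ENNReal.ofReal (B b - B a) := by
      intro t ht
      rw [StieltjesFunction.measure_Ioc]
      refine ENNReal.ofReal_le_ofReal ?_
      have h1 := hE t ht.2
      have h2 := hBG a
      have h3 := B.mono (hs' ht.1).2
      linarith
    by_cases hmem : sSup (s ∩ E) ∈ s ∩ E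
    · exact (measure_mono fun x hx => Set.mem_Ioc.2 ⟨(hs' hx.1).1, hlub.1 hx⟩).trans (inc _ hmem)
    · have hsub : s ∩ E ⊆ ⋃ k, Set.Ioc a (u k) := by
        intro x hx
        have hlt : x < sSup (s ∩ E) :=
          lt_of_le_of_ne (hlub.1 hx) fun h => hmem (h ▸ hx)
        obtain ⟨k, hk⟩ := (hu_lim.eventually (lt_mem_nhds hlt)).exists
        exact Set.mem_iUnion.2 ⟨k, ⟨(hs' hx.1).1, hk.le⟩⟩
      refine (measure_mono hsub).trans ?_
      have hdir : Monotone fun k => Set.Ioc a (u k) := fun i j hij =>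
        Set.Ioc_subset_Ioc_right (hu_mono hij)
      rw [hdir.measure_iUnion]
      exact iSup_le fun k => inc _ (hu_mem k)
  have h : OuterMeasure.restrict E G.measure.toOuterMeasure ≤ B.outer := by
    refine OuterMeasure.le_ofFunction.2 fun s => ?_
    rw [OuterMeasure.restrict_apply]
    exact key s
  have h2 := h E
  rw [OuterMeasure.restrict_apply, Set.inter_self] at h2
  rw [StieltjesFunction.measure_def B]
  exact h2

/-! ### The negative part of a difference of Stieltjes functions -/

/-- The pointwise maximum of two Stieltjes functions. -/
noncomputable def stieltjesMax (f g : StieltjesFunction ℝ) : StieltjesFunction ℝ where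
  toFun x := max (f x) (g x)
  mono' := f.mono.max g.mono
  right_continuous' x := (f.right_continuous x).max (g.right_continuous x)

lemma tendsto_atBot_zero (f : StieltjesFunction ℝ) (hf : ∀ x < 0, f x = 0) :
    Tendsto f atBot (𝓝 0) :=
  tendsto_const_nhds.congr' <| (eventually_lt_atBot 0).mono fun x hx => (hf x hx).symm

lemma measure_Iic_eq (f : StieltjesFunction ℝ) (hf : ∀ x < 0, f x = 0) (T : ℝ) :
    f.measure (Set.Iic T) = ENNReal.ofReal (f T) := by
  rw [f.measure_Iic (tendsto_atBot_zero f hf), sub_zero]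

lemma stieltjes_nonneg (f : StieltjesFunction ℝ) (hf : ∀ x < 0, f x = 0) (T : ℝ) : 0 ≤ f T := by
  have h0 : f (min (T - 1) (-1)) = 0 :=
    hf _ (lt_of_le_of_lt (min_le_right _ _) (by norm_num))
  rw [← h0]
  exact f.mono ((min_le_left _ _).trans (by linarith))

/-- The measure of `f` restricted to `(-∞, T]`. -/
noncomputable def trunc (T : ℝ) (f : StieltjesFunction ℝ) : Measure ℝ :=
  f.measure.restrict (Set.Iic T)

lemma trunc_finite (T : ℝ) (f : StieltjesFunction ℝ) (hf : ∀ x < 0, f x = 0) :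
    IsFiniteMeasure (trunc T f) := by
  refine ⟨?_⟩
  rw [trunc, Measure.restrict_apply_univ, measure_Iic_eq f hf]
  exact ENNReal.ofReal_lt_top

/-- Change of variables inequality for the negative part of `f - g`: as `(f - g)⁻ = max f g - f`
and `d(max f g)` is at most `dg` on `{f ≤ g}` and at most `df` on `{g ≤ f}`, integrating over
`(-∞, T]` gives `(f - g)⁻(T) ≤ ∫_C (dg - df)` for every measurable `C` between
`{f < g}` and `{f ≤ g}`. -/
lemma negPart_le (f g : StieltjesFunction ℝ) (hf : ∀ x < 0, f x = 0) (hg : ∀ x < 0, g x = 0)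
    (T : ℝ) (C : Set ℝ) (hC : MeasurableSet C) (h1 : ∀ x, f x < g x → x ∈ C)
    (h2 : ∀ x ∈ C, f x ≤ g x) :
    (trunc T f).real C + max (g T - f T) 0 ≤ (trunc T g).real C := by
  have := trunc_finite T f hf
  have := trunc_finite T g hg
  have hm : ∀ x < 0, stieltjesMax f g x = 0 := fun x hx => by
    change max (f x) (g x) = 0
    rw [hf x hx, hg x hx, max_self]
  have := trunc_finite T _ hm
  have ev : ∀ F : StieltjesFunction ℝ, (∀ x < 0, F x = 0) → (trunc T F).real Set.univ = F T := by
    intro F hF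
    rw [Measure.real, trunc, Measure.restrict_apply_univ, measure_Iic_eq F hF,
      ENNReal.toReal_ofReal (stieltjes_nonneg F hF T)]
  have eM := ev _ hm
  have eF := ev _ hf
  rw [← measureReal_add_measureReal_compl hC] at eM eF
  have a1 : (trunc T (stieltjesMax f g)).real C ≤ (trunc T g).real C := by
    refine ENNReal.toReal_mono (measure_ne_top _ _) ?_
    rw [trunc, trunc, Measure.restrict_apply hC, Measure.restrict_apply hC]
    exact measure_le_of_contact _ _ (fun x => le_max_right _ _) _
      fun x hx => max_le (h2 x hx.1) le_rfl
  have a2 : (trunc T (stieltjesMax f g)).real Cᶜ ≤ (trunc T f).real Cᶜ := by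
    refine ENNReal.toReal_mono (measure_ne_top _ _) ?_
    rw [trunc, trunc, Measure.restrict_apply hC.compl, Measure.restrict_apply hC.compl]
    exact measure_le_of_contact _ _ (fun x => le_max_left _ _) _
      fun x hx => max_le le_rfl (not_lt.1 fun h => hx.1 (h1 x h))
  have e : stieltjesMax f g T = max (g T - f T) 0 + f T := by
    change max (f T) (g T) = _
    rw [max_add, sub_add_cancel, zero_add, max_comm]
  linarith

/-! ### Nonnegative matrices with powers tending to zero -/

/-- A subinvariant vector of a nonnegative matrix with powers tending to zero is nonpositive:
iterate `z ≤ Pᵗ z`. -/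
lemma nonpos_of_le_mulVec {n : ℕ} (P : Matrix (Fin n) (Fin n) ℝ) (hP : ∀ i j, 0 ≤ P i j)
    (hPpow : Tendsto (fun k : ℕ => P ^ k) atTop (𝓝 0)) (z : Fin n → ℝ)
    (hz : z ≤ P.transpose.mulVec z) : z ≤ 0 := by
  have hmono : ∀ x y : Fin n → ℝ, x ≤ y → P.transpose.mulVec x ≤ P.transpose.mulVec y := by
    intro x y hxy i
    simp only [Matrix.mulVec, dotProduct, Matrix.transpose_apply]
    exact Finset.sum_le_sum fun j _ => mul_le_mul_of_nonneg_left (hxy j) (hP j i)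
  have hk : ∀ k : ℕ, z ≤ ((P ^ k).transpose).mulVec z := by
    intro k
    induction k with
    | zero => simp
    | succ k ih =>
      refine hz.trans ((hmono _ _ ih).trans_eq ?_)
      rw [Matrix.mulVec_mulVec, ← Matrix.transpose_mul, pow_succ]
  have hc : Continuous fun A : Matrix (Fin n) (Fin n) ℝ => A.transpose.mulVec z := by fun_prop
  have hlim := (hc.tendsto 0).comp hPpow
  simp only [Matrix.transpose_zero, Matrix.zero_mulVec] at hlim
  exact ge_of_tendsto' hlim hk

lemma one_sub_transpose_mulVec {n : ℕ} (P : Matrix (Fin n) (Fin n) ℝ) (v : Fin n → ℝ)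
    (i : Fin n) : (1 - P.transpose).mulVec v i = v i - ∑ j, P j i * v j := by
  rw [Matrix.sub_mulVec, Matrix.one_mulVec]
  rfl

lemma isUnit_one_sub_transpose {n : ℕ} (P : Matrix (Fin n) (Fin n) ℝ) (hP : ∀ i j, 0 ≤ P i j)
    (hPpow : Tendsto (fun k : ℕ => P ^ k) atTop (𝓝 0)) : IsUnit (1 - P.transpose) := by
  refine Matrix.mulVec_injective_iff_isUnit.1 fun x y hxy => ?_
  -- A fixed vector of `Pᵗ` is nonpositive, and so is its negative.
  have aux : ∀ x y : Fin n → ℝ, (1 - P.transpose).mulVec x = (1 - P.transpose).mulVec y →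
      x ≤ y := by
    intro x y hxy
    refine sub_nonpos.1 (nonpos_of_le_mulVec P hP hPpow (x - y) (le_of_eq ?_))
    rw [Matrix.sub_mulVec, Matrix.sub_mulVec, Matrix.one_mulVec, Matrix.one_mulVec] at hxy
    rw [Matrix.mulVec_sub]
    exact sub_eq_sub_iff_sub_eq_sub.1 hxy
  exact le_antisymm (aux x y hxy) (aux y x hxy.symm)

/-! ### Nonnegative combinations of Stieltjes functions -/

lemma trunc_add (T : ℝ) (f g : StieltjesFunction ℝ) : trunc T (f + g) = trunc T f + trunc T g := by
  rw [trunc, StieltjesFunction.measure_add, Measure.restrict_add, trunc, trunc]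

/-- The Stieltjes function `∑ j, P j i * ℓ j`. -/
noncomputable def mix {n : ℕ} (P : Matrix (Fin n) (Fin n) ℝ) (ℓ : Fin n → StieltjesFunction ℝ)
    (i : Fin n) : StieltjesFunction ℝ := ∑ j, (P j i).toNNReal • ℓ j

lemma sum_stieltjes_apply {ι : Type*} (s : Finset ι) (F : ι → StieltjesFunction ℝ) (x : ℝ) :
    (∑ j ∈ s, F j) x = ∑ j ∈ s, F j x := by
  classical
  induction s using Finset.induction_on with
  | empty => simp
  | insert a s ha ih => rw [Finset.sum_insert ha, Finset.sum_insert ha, ← ih]; rfl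

lemma mix_apply {n : ℕ} (P : Matrix (Fin n) (Fin n) ℝ) (hP : ∀ i j, 0 ≤ P i j)
    (ℓ : Fin n → StieltjesFunction ℝ) (i : Fin n) (x : ℝ) :
    mix P ℓ i x = ∑ j, P j i * ℓ j x := by
  rw [mix, sum_stieltjes_apply]
  refine Finset.sum_congr rfl fun j _ => ?_
  change ((P j i).toNNReal : ℝ) * ℓ j x = _
  rw [Real.coe_toNNReal _ (hP j i)]

lemma sum_stieltjes_measure {ι : Type*} (s : Finset ι) (F : ι → StieltjesFunction ℝ) :
    (∑ j ∈ s, F j).measure = ∑ j ∈ s, (F j).measure := by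
  classical
  induction s using Finset.induction_on with
  | empty => simp
  | insert a s ha ih =>
    rw [Finset.sum_insert ha, Finset.sum_insert ha, ← ih, StieltjesFunction.measure_add]

lemma trunc_mix_real {n : ℕ} (P : Matrix (Fin n) (Fin n) ℝ) (hP : ∀ i j, 0 ≤ P i j)
    (ℓ : Fin n → StieltjesFunction ℝ) (hℓ : ∀ j, ∀ x < 0, ℓ j x = 0) (i : Fin n) (T : ℝ)
    (C : Set ℝ) (hC : MeasurableSet C) :
    (trunc T (mix P ℓ i)).real C = ∑ j, P j i * (trunc T (ℓ j)).real C := by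
  have := fun j => trunc_finite T (ℓ j) (hℓ j)
  rw [Measure.real, trunc, mix, sum_stieltjes_measure, Measure.restrict_apply hC,
    Measure.finsetSum_apply, ENNReal.toReal_sum]
  · refine Finset.sum_congr rfl fun j _ => ?_
    rw [StieltjesFunction.measure_smul, Measure.smul_apply, ENNReal.toReal_smul, NNReal.smul_def,
      Real.coe_toNNReal _ (hP j i), smul_eq_mul, Measure.real, trunc, Measure.restrict_apply hC]
  · intro j _
    rw [StieltjesFunction.measure_smul, Measure.smul_apply, ← Measure.restrict_apply hC]
    exact ENNReal.mul_ne_top ENNReal.coe_ne_top (measure_ne_top (trunc T (ℓ j)) _)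

lemma add_zero_neg {f g : StieltjesFunction ℝ} (hf : ∀ x < 0, f x = 0) (hg : ∀ x < 0, g x = 0) :
    ∀ x < 0, (f + g) x = 0 := fun x hx => by
  rw [StieltjesFunction.add_apply, hf x hx, hg x hx, add_zero]

lemma mix_zero_neg {n : ℕ} (P : Matrix (Fin n) (Fin n) ℝ) (hP : ∀ i j, 0 ≤ P i j)
    {ℓ : Fin n → StieltjesFunction ℝ} (hℓ : ∀ j, ∀ x < 0, ℓ j x = 0) (i : Fin n) :
    ∀ x < 0, mix P ℓ i x = 0 := fun x hx => by
  rw [mix_apply P hP]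
  exact Finset.sum_eq_zero fun j _ => by rw [hℓ j x hx, mul_zero]

/-! ### Comparison of the regulators -/

/-- Here `d`, `ℓ₁`, `ℓ₂` are `X₂ - X₁`, `L₁`, `L₂` extended by zero to the line, and
`W₂ - W₁` is the difference of the two functions compared in `hz₁` and `hz₂`, which therefore
express complementarity. The vector of masses of the negative parts of `dℓ₁ - dℓ₂` on `(-∞, T]` is
subinvariant under `Pᵗ`, hence zero, and then so is the negative part of `(W₂ - W₁)(T)`. -/
lemma regulator_comparison {n : ℕ} (P : Matrix (Fin n) (Fin n) ℝ) (hP : ∀ i j, 0 ≤ P i j)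
    (hPpow : Tendsto (fun k : ℕ => P ^ k) atTop (𝓝 0))
    (d ℓ₁ ℓ₂ : Fin n → StieltjesFunction ℝ)
    (hd : ∀ i, ∀ x < 0, d i x = 0) (hℓ₁ : ∀ i, ∀ x < 0, ℓ₁ i x = 0)
    (hℓ₂ : ∀ i, ∀ x < 0, ℓ₂ i x = 0)
    (hz₁ : ∀ i, (ℓ₁ i).measure {x | (d i + ℓ₂ i + mix P ℓ₁ i) x < (ℓ₁ i + mix P ℓ₂ i) x} = 0)
    (hz₂ : ∀ i, (ℓ₂ i).measure {x | (ℓ₁ i + mix P ℓ₂ i) x < (d i + ℓ₂ i + mix P ℓ₁ i) x} = 0)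
    (T : ℝ) :
    (∀ i, ∀ S, MeasurableSet S → trunc T (ℓ₂ i) S ≤ trunc T (ℓ₁ i) S) ∧
      ∀ i, (ℓ₁ i + mix P ℓ₂ i) T ≤ (d i + ℓ₂ i + mix P ℓ₁ i) T := by
  have fd := fun j => trunc_finite T (d j) (hd j)
  have f1 := fun j => trunc_finite T (ℓ₁ j) (hℓ₁ j)
  have f2 := fun j => trunc_finite T (ℓ₂ j) (hℓ₂ j)
  have fm1 := fun j => trunc_finite T _ (mix_zero_neg P hP hℓ₁ j)
  have fm2 := fun j => trunc_finite T _ (mix_zero_neg P hP hℓ₂ j)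
  choose N hN hNpos hNneg using fun i => hahn_decomposition (trunc T (ℓ₂ i)) (trunc T (ℓ₁ i))
  have hNpos' : ∀ i S, MeasurableSet S → S ⊆ N i →
      (trunc T (ℓ₁ i)).real S ≤ (trunc T (ℓ₂ i)).real S := fun i S hS hSN =>
    ENNReal.toReal_mono (measure_ne_top _ _) (hNpos i S hS hSN)
  have hNneg' : ∀ i S, MeasurableSet S → S ⊆ (N i)ᶜ →
      (trunc T (ℓ₂ i)).real S ≤ (trunc T (ℓ₁ i)).real S := fun i S hS hSN =>
    ENNReal.toReal_mono (measure_ne_top _ _) (hNneg i S hS hSN)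
  -- `m i` is the mass on `(-∞, T]` of the negative part of `dℓ₁ i - dℓ₂ i`.
  set m : Fin n → ℝ := fun i => (trunc T (ℓ₂ i)).real (N i) - (trunc T (ℓ₁ i)).real (N i) with hm
  have hm0 : ∀ i, 0 ≤ m i := fun i => sub_nonneg.2 (hNpos' i _ (hN i) le_rfl)
  have hmax : ∀ i S, MeasurableSet S →
      (trunc T (ℓ₂ i)).real S - (trunc T (ℓ₁ i)).real S ≤ m i := by
    intro i S hS
    have e1 := hNpos' i (N i \ S) ((hN i).diff hS) Set.sdiff_subset
    have e2 := hNneg' i (S \ N i) (hS.diff (hN i)) (fun x hx => hx.2)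
    have a1 := measureReal_inter_add_sdiff (μ := trunc T (ℓ₁ i)) (s := S) (hN i)
    have a2 := measureReal_inter_add_sdiff (μ := trunc T (ℓ₂ i)) (s := S) (hN i)
    have b1 := measureReal_inter_add_sdiff (μ := trunc T (ℓ₁ i)) (s := (N i)) hS
    have b2 := measureReal_inter_add_sdiff (μ := trunc T (ℓ₂ i)) (s := (N i)) hS
    rw [Set.inter_comm] at b1 b2
    simp only [hm]
    linarith
  have main : ∀ i, m i + max ((ℓ₁ i + mix P ℓ₂ i) T - (d i + ℓ₂ i + mix P ℓ₁ i) T) 0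
      ≤ ∑ j, P j i * m j := by
    intro i
    set A := d i + ℓ₂ i + mix P ℓ₁ i with hA
    set B := ℓ₁ i + mix P ℓ₂ i with hB
    have mlt : MeasurableSet {x | A x < B x} :=
      measurableSet_lt A.mono.measurable B.mono.measurable
    have mle : MeasurableSet {x | A x ≤ B x} :=
      measurableSet_le A.mono.measurable B.mono.measurable
    -- This set carries the whole negative part of `dℓ₁ i - dℓ₂ i`, and none of the positive part.
    set C : Set ℝ := {x | A x < B x} ∪ (N i ∩ {x | A x ≤ B x}) with hC
    have mC : MeasurableSet C := mlt.union ((hN i).inter mle)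
    have h := negPart_le A B
      (add_zero_neg (add_zero_neg (hd i) (hℓ₂ i)) (mix_zero_neg P hP hℓ₁ i))
      (add_zero_neg (hℓ₁ i) (mix_zero_neg P hP hℓ₂ i)) T C mC (fun x hx => Or.inl hx)
      (fun x hx => hx.elim (fun h => le_of_lt h) fun h => h.2)
    rw [hA, hB, trunc_add, trunc_add, trunc_add, measureReal_add_apply, measureReal_add_apply,
      measureReal_add_apply, trunc_mix_real P hP ℓ₁ hℓ₁ i T C mC,
      trunc_mix_real P hP ℓ₂ hℓ₂ i T C mC, ← hA, ← hB] at h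
    have hdC : 0 ≤ (trunc T (d i)).real C := measureReal_nonneg
    have n1 : (trunc T (ℓ₁ i)).real (C \ N i) = 0 := by
      have : trunc T (ℓ₁ i) (C \ N i) = 0 := by
        refine measure_mono_null ?_ (nonpos_iff_eq_zero.1
          ((Measure.restrict_apply_le _ _).trans (hz₁ i).le))
        rintro x ⟨hx | hx, hxN⟩
        · exact hx
        · exact absurd hx.1 hxN
      rw [Measure.real, this, ENNReal.toReal_zero]
    have n2 : (trunc T (ℓ₂ i)).real (N i \ C) = 0 := by
      have : trunc T (ℓ₂ i) (N i \ C) = 0 := by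
        refine measure_mono_null ?_ (nonpos_iff_eq_zero.1
          ((Measure.restrict_apply_le _ _).trans (hz₂ i).le))
        rintro x ⟨hxN, hx⟩
        exact not_le.1 fun h : A x ≤ B x => hx (Or.inr ⟨hxN, h⟩)
      rw [Measure.real, this, ENNReal.toReal_zero]
    have p1 : 0 ≤ (trunc T (ℓ₁ i)).real (N i \ C) := measureReal_nonneg
    have p2 : 0 ≤ (trunc T (ℓ₂ i)).real (C \ N i) := measureReal_nonneg
    have a1 := measureReal_inter_add_sdiff (μ := trunc T (ℓ₁ i)) (s := C) (hN i)
    have a2 := measureReal_inter_add_sdiff (μ := trunc T (ℓ₂ i)) (s := C) (hN i)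
    have b1 := measureReal_inter_add_sdiff (μ := trunc T (ℓ₁ i)) (s := (N i)) mC
    have b2 := measureReal_inter_add_sdiff (μ := trunc T (ℓ₂ i)) (s := (N i)) mC
    rw [Set.inter_comm] at b1 b2
    have hmi : m i ≤ (trunc T (ℓ₂ i)).real C - (trunc T (ℓ₁ i)).real C := by
      simp only [hm]
      linarith
    have hsum : ∑ j, P j i * (trunc T (ℓ₂ j)).real C - ∑ j, P j i * (trunc T (ℓ₁ j)).real C
        ≤ ∑ j, P j i * m j := by
      rw [← Finset.sum_sub_distrib]
      refine Finset.sum_le_sum fun j _ => ?_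
      rw [← mul_sub]
      exact mul_le_mul_of_nonneg_left (hmax j C mC) (hP j i)
    linarith
  have hm_le : m ≤ 0 := by
    refine nonpos_of_le_mulVec P hP hPpow m fun i => ?_
    exact (le_add_of_nonneg_right (le_max_right _ _)).trans (main i)
  have hm_eq : ∀ i, m i = 0 := fun i => le_antisymm (hm_le i) (hm0 i)
  refine ⟨fun i S hS => ?_, fun i => ?_⟩
  · have := hmax i S hS
    rw [hm_eq, sub_nonpos] at this
    exact (ENNReal.toReal_le_toReal (measure_ne_top _ _) (measure_ne_top _ _)).1 this
  · have h := main i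
    rw [hm_eq, zero_add, Finset.sum_eq_zero fun j _ => by rw [hm_eq, mul_zero]] at h
    exact sub_nonpos.1 ((le_max_left _ _).trans h)

/-! ### Extension by zero to negative times -/

lemma extZero_of_nonneg (f : ℝ → ℝ) {t : ℝ} (ht : 0 ≤ t) : extZero f t = f t :=
  if_neg (not_lt.2 ht)

lemma extZero_of_neg (f : ℝ → ℝ) {t : ℝ} (ht : t < 0) : extZero f t = 0 := if_pos ht

lemma extZero_monotone {f : ℝ → ℝ} (h0 : ∀ t, 0 ≤ t → 0 ≤ f t)
    (hm : MonotoneOn f (Set.Ici (0 : ℝ))) : Monotone (extZero f) := by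
  intro s t hst
  rcases lt_or_ge s 0 with hs | hs
  · rw [extZero_of_neg f hs]
    rcases lt_or_ge t 0 with ht | ht
    · rw [extZero_of_neg f ht]
    · rw [extZero_of_nonneg f ht]
      exact h0 t ht
  · rw [extZero_of_nonneg f hs, extZero_of_nonneg f (hs.trans hst)]
    exact hm hs (hs.trans hst) hst

lemma extZero_rightCts {f : ℝ → ℝ} (hc : ∀ t, 0 ≤ t → ContinuousWithinAt f (Set.Ici t) t) (x : ℝ) :
    ContinuousWithinAt (extZero f) (Set.Ici x) x := by
  rcases lt_or_ge x 0 with hx | hx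
  · refine ContinuousAt.continuousWithinAt ?_
    refine (continuousAt_const (y := (0 : ℝ))).congr ?_
    filter_upwards [gt_mem_nhds hx] with y hy
    exact (extZero_of_neg f hy).symm
  · exact (hc x hx).congr (fun y hy => extZero_of_nonneg f (hx.trans hy)) (extZero_of_nonneg f hx)

/-- The extension of `f` by zero to the negative half-line as a Stieltjes function; a positive
value `f 0` becomes an atom at `0`. -/
noncomputable def extSt (f : ℝ → ℝ) (h0 : ∀ t, 0 ≤ t → 0 ≤ f t)
    (hm : MonotoneOn f (Set.Ici (0 : ℝ)))
    (hc : ∀ t, 0 ≤ t → ContinuousWithinAt f (Set.Ici t) t) : StieltjesFunction ℝ :=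
  ⟨extZero f, extZero_monotone h0 hm, extZero_rightCts hc⟩

lemma extSt_of_nonneg {f : ℝ → ℝ} (h0 : ∀ t, 0 ≤ t → 0 ≤ f t)
    (hm : MonotoneOn f (Set.Ici (0 : ℝ)))
    (hc : ∀ t, 0 ≤ t → ContinuousWithinAt f (Set.Ici t) t) {t : ℝ} (ht : 0 ≤ t) :
    extSt f h0 hm hc t = f t := extZero_of_nonneg f ht

lemma extSt_of_neg {f : ℝ → ℝ} (h0 : ∀ t, 0 ≤ t → 0 ≤ f t)
    (hm : MonotoneOn f (Set.Ici (0 : ℝ)))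
    (hc : ∀ t, 0 ≤ t → ContinuousWithinAt f (Set.Ici t) t) :
    ∀ t < 0, extSt f h0 hm hc t = 0 := fun _ ht => extZero_of_neg f ht

lemma lsMeasure_extZero {f : ℝ → ℝ} (h0 : ∀ t, 0 ≤ t → 0 ≤ f t)
    (hm : MonotoneOn f (Set.Ici (0 : ℝ)))
    (hc : ∀ t, 0 ≤ t → ContinuousWithinAt f (Set.Ici t) t) :
    lsMeasure (extZero f) = (extSt f h0 hm hc).measure :=
  dif_pos ⟨extZero_monotone h0 hm, extZero_rightCts hc⟩

/-! ### The Skorohod problem -/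

/-- Theorem 1.1(ii): L¹ - L² is nonnegative, nondecreasing, dominated by R⁻¹(X²-X¹),
and (W¹, L¹ - L²) solves the Skorohod problem for X³ = X¹ + R·L². -/
theorem skorohod_regulator_difference
    {n : ℕ} (hn : 0 < n) (P : Matrix (Fin n) (Fin n) ℝ)
    (hPnonneg : ∀ i j, 0 ≤ P i j)
    (hPpow : Filter.Tendsto (fun k : ℕ => P ^ k) Filter.atTop (nhds 0))
    (X₁ X₂ W₁ L₁ W₂ L₂ : ℝ → Fin n → ℝ)
    (hX₁ : Cadlag X₁) (hX₂ : Cadlag X₂)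
    (hdiff_nonneg : ∀ t : ℝ, 0 ≤ t → 0 ≤ X₂ t - X₁ t)
    (hdiff_mono : ∀ i : Fin n, MonotoneOn (fun t => X₂ t i - X₁ t i) (Set.Ici (0 : ℝ)))
    (h₁ : IsSolutionPair (1 - P.transpose) X₁ W₁ L₁)
    (h₂ : IsSolutionPair (1 - P.transpose) X₂ W₂ L₂) :
    (∀ t : ℝ, 0 ≤ t → 0 ≤ L₁ t - L₂ t) ∧
    (∀ i : Fin n, MonotoneOn (fun t => L₁ t i - L₂ t i) (Set.Ici (0 : ℝ))) ∧
    (∀ t : ℝ, 0 ≤ t → L₁ t - L₂ t ≤ (1 - P.transpose)⁻¹.mulVec (X₂ t - X₁ t)) ∧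
    IsSolutionPair (1 - P.transpose)
      (fun t => X₁ t + (1 - P.transpose).mulVec (L₂ t)) W₁ (fun t => L₁ t - L₂ t) := by
  have c1 : ∀ (i : Fin n) (t : ℝ), 0 ≤ t →
      ContinuousWithinAt (fun s => X₂ s i - X₁ s i) (Set.Ici t) t := fun i t ht =>
    (continuousWithinAt_pi.1 (hX₂.1 t ht) i).sub (continuousWithinAt_pi.1 (hX₁.1 t ht) i)
  set d : Fin n → StieltjesFunction ℝ := fun i =>
    extSt (fun s => X₂ s i - X₁ s i) (fun t ht => hdiff_nonneg t ht i) (hdiff_mono i) (c1 i)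
    with hd
  set ℓ₁ : Fin n → StieltjesFunction ℝ := fun i =>
    extSt (fun s => L₁ s i) (h₁.nonnegL i) (h₁.monoL i) (h₁.rcL i) with hℓ₁
  set ℓ₂ : Fin n → StieltjesFunction ℝ := fun i =>
    extSt (fun s => L₂ s i) (h₂.nonnegL i) (h₂.monoL i) (h₂.rcL i) with hℓ₂
  have d_neg : ∀ i, ∀ x < 0, d i x = 0 := fun i => extSt_of_neg _ _ _
  have ℓ₁_neg : ∀ i, ∀ x < 0, ℓ₁ i x = 0 := fun i => extSt_of_neg _ _ _
  have ℓ₂_neg : ∀ i, ∀ x < 0, ℓ₂ i x = 0 := fun i => extSt_of_neg _ _ _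
  have d_pos : ∀ i x, 0 ≤ x → d i x = X₂ x i - X₁ x i := fun i x hx => extSt_of_nonneg _ _ _ hx
  have ℓ₁_pos : ∀ i x, 0 ≤ x → ℓ₁ i x = L₁ x i := fun i x hx => extSt_of_nonneg _ _ _ hx
  have ℓ₂_pos : ∀ i x, 0 ≤ x → ℓ₂ i x = L₂ x i := fun i x hx => extSt_of_nonneg _ _ _ hx
  have A_neg : ∀ i, ∀ x < 0, (d i + ℓ₂ i + mix P ℓ₁ i) x = 0 := fun i =>
    add_zero_neg (add_zero_neg (d_neg i) (ℓ₂_neg i)) (mix_zero_neg P hPnonneg ℓ₁_neg i)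
  have B_neg : ∀ i, ∀ x < 0, (ℓ₁ i + mix P ℓ₂ i) x = 0 := fun i =>
    add_zero_neg (ℓ₁_neg i) (mix_zero_neg P hPnonneg ℓ₂_neg i)
  have AB : ∀ i x, 0 ≤ x →
      (d i + ℓ₂ i + mix P ℓ₁ i) x - (ℓ₁ i + mix P ℓ₂ i) x = W₂ x i - W₁ x i := by
    intro i x hx
    simp only [StieltjesFunction.add_apply, mix_apply P hPnonneg, d_pos _ x hx, ℓ₁_pos _ x hx,
      ℓ₂_pos _ x hx]
    rw [h₁.eqn x hx, h₂.eqn x hx, Pi.add_apply, Pi.add_apply, one_sub_transpose_mulVec,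
      one_sub_transpose_mulVec]
    ring
  have key := regulator_comparison P hPnonneg hPpow d ℓ₁ ℓ₂ d_neg ℓ₁_neg ℓ₂_neg
    (by
      intro i
      have hf := h₁.flat i
      rw [lsMeasure_extZero (h₁.nonnegL i) (h₁.monoL i) (h₁.rcL i)] at hf
      refine measure_mono_null (fun x hx => ?_) hf
      rw [Set.mem_ofPred_eq] at hx
      have hx0 : 0 ≤ x := not_lt.1 fun h => by
        rw [A_neg i x h, B_neg i x h] at hx
        exact lt_irrefl _ hx
      have := AB i x hx0
      have := h₂.nonnegW i x hx0
      exact ⟨hx0, by linarith⟩)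
    (by
      intro i
      have hf := h₂.flat i
      rw [lsMeasure_extZero (h₂.nonnegL i) (h₂.monoL i) (h₂.rcL i)] at hf
      refine measure_mono_null (fun x hx => ?_) hf
      rw [Set.mem_ofPred_eq] at hx
      have hx0 : 0 ≤ x := not_lt.1 fun h => by
        rw [A_neg i x h, B_neg i x h] at hx
        exact lt_irrefl _ hx
      have := AB i x hx0
      have := h₁.nonnegW i x hx0
      exact ⟨hx0, by linarith⟩)
  have hnonneg : ∀ (i : Fin n) (t : ℝ), 0 ≤ t → 0 ≤ L₁ t i - L₂ t i := by
    intro i t ht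
    have h := (key t).1 i (Set.Iic t) measurableSet_Iic
    rw [trunc, trunc, Measure.restrict_apply_self, Measure.restrict_apply_self,
      measure_Iic_eq _ (ℓ₁_neg i), measure_Iic_eq _ (ℓ₂_neg i), ℓ₁_pos i t ht, ℓ₂_pos i t ht,
      ENNReal.ofReal_le_ofReal_iff (h₁.nonnegL i t ht)] at h
    exact sub_nonneg.2 h
  have hmono : ∀ i : Fin n, MonotoneOn (fun t => L₁ t i - L₂ t i) (Set.Ici (0 : ℝ)) := by
    intro i s hs t ht hst
    have h := (key t).1 i (Set.Ioc s t) measurableSet_Ioc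
    rw [trunc, trunc, Measure.restrict_apply measurableSet_Ioc,
      Measure.restrict_apply measurableSet_Ioc,
      Set.inter_eq_left.2 (Set.Ioc_subset_Iic_self : Set.Ioc s t ⊆ Set.Iic t),
      StieltjesFunction.measure_Ioc, StieltjesFunction.measure_Ioc, ℓ₁_pos i t ht, ℓ₂_pos i t ht,
      ℓ₁_pos i s hs, ℓ₂_pos i s hs,
      ENNReal.ofReal_le_ofReal_iff (sub_nonneg.2 (h₁.monoL i hs ht hst))] at h
    change L₁ s i - L₂ s i ≤ L₁ t i - L₂ t i
    linarith
  have hrc : ∀ (i : Fin n) (t : ℝ), 0 ≤ t →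
      ContinuousWithinAt (fun s => L₁ s i - L₂ s i) (Set.Ici t) t := fun i t ht =>
    (h₁.rcL i t ht).sub (h₂.rcL i t ht)
  refine ⟨fun t ht i => hnonneg i t ht, hmono, fun t ht => ?_, ?_, hnonneg, hmono, hrc,
    h₁.nonnegW, fun i => ?_⟩
  · -- With `z = (L₁ - L₂) - R⁻¹ (X₂ - X₁)`, the inequality `W₁ ≤ W₂` reads `R z ≤ 0`.
    have hu := isUnit_one_sub_transpose P hPnonneg hPpow
    have hdet : IsUnit (1 - P.transpose).det := (Matrix.isUnit_iff_isUnit_det _).1 hu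
    refine sub_nonpos.1 (nonpos_of_le_mulVec P hPnonneg hPpow _ fun i => ?_)
    set z := L₁ t - L₂ t - (1 - P.transpose)⁻¹.mulVec (X₂ t - X₁ t) with hz
    have hRz : (1 - P.transpose).mulVec z = W₁ t - W₂ t := by
      rw [hz, Matrix.mulVec_sub, Matrix.mulVec_mulVec, Matrix.mul_nonsing_inv _ hdet,
        Matrix.one_mulVec, Matrix.mulVec_sub, h₁.eqn t ht, h₂.eqn t ht]
      abel
    have hi := congrFun hRz i
    rw [Matrix.sub_mulVec, Matrix.one_mulVec, Pi.sub_apply, Pi.sub_apply] at hi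
    have h3 := (key t).2 i
    have h4 := AB i t ht
    linarith
  · intro t ht
    rw [h₁.eqn t ht, Matrix.mulVec_sub]
    abel
  · -- `dL₁ = dL₂ + d(L₁ - L₂)`, so `d(L₁ - L₂)` is dominated by `dL₁`.
    change lsMeasure (extZero fun t => L₁ t i - L₂ t i) _ = 0
    rw [lsMeasure_extZero (hnonneg i) (hmono i) (hrc i)]
    have hf := h₁.flat i
    have e : extSt (fun s => L₁ s i) (h₁.nonnegL i) (h₁.monoL i) (h₁.rcL i) =
        ℓ₂ i + extSt (fun s => L₁ s i - L₂ s i) (hnonneg i) (hmono i) (hrc i) := by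
      ext x
      rw [StieltjesFunction.add_apply]
      rcases lt_or_ge x 0 with hx | hx
      · rw [ℓ₂_neg i x hx, extSt_of_neg _ _ _ x hx, extSt_of_neg _ _ _ x hx, add_zero]
      · rw [ℓ₂_pos i x hx, extSt_of_nonneg _ _ _ hx, extSt_of_nonneg _ _ _ hx]
        ring
    rw [lsMeasure_extZero (h₁.nonnegL i) (h₁.monoL i) (h₁.rcL i), e,
      StieltjesFunction.measure_add, Measure.add_apply] at hf
    exact (add_eq_zero.1 hf).2
end

section
/- Let X be a càdlàg function from [0,∞) to ℝⁿ and fix i ∈ {1,…,n}. Suppose there exist a ∈ [0,∞)ⁿ and a solution pair (Wᵃ, Lᵃ) of the Skorohod problem for a + X such that lim_{t→∞} Lᵃ_i(t) = ∞. Then for every b ∈ [0,∞)ⁿ and every solution pair (Wᵇ, Lᵇ) of the Skorohod problem for b + X, lim_{t→∞} Lᵇ_i(t) = ∞. -/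
/-!
The regulator of a solution pair is minimal: if `(W, L)` solves the Skorohod problem for `Y` and
`K` is nonnegative and nondecreasing with `Y + R K ≥ 0`, then `L ≤ K` (`regulator_le`).
Indeed, let `D` be the coordinatewise supremum of `(L - K)⁺` over `[0, t]`. While `L_i` exceeds
`K_i(t) + (Pᵗ D)_i`, the equation forces `W_i > 0`, so `dL_i` does not charge these times and
`L_i` can never get there (`le_of_flat`). Hence `D ≤ Pᵗ D`, and iterating with `Pᵏ → 0` gives
`D ≤ 0`.

Given solution pairs for `a + X` and `b + X`, choose `v ≥ 0` with `R v = b`. Then `K = Lᵇ + v`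
satisfies `a + X + R K = a + Wᵇ ≥ 0`, so `Lᵃ ≤ Lᵇ + v`, and divergence of `Lᵃ_i` forces that of
`Lᵇ_i`. The existence and positivity of `v` follow from the same iteration argument, in the form
`Q v ≤ v → 0 ≤ v` (`nonneg_of_mulVec_le`).
-/

open MeasureTheory Filter Topology

/-- Iterating `Q v ≤ v` gives `Qᵏ v ≤ v` for all `k`, and `Qᵏ v → 0`. -/
theorem nonneg_of_mulVec_le {n : ℕ} {Q : Matrix (Fin n) (Fin n) ℝ}
    (hQ : ∀ i j, 0 ≤ Q i j) (hpow : Tendsto (fun k : ℕ => Q ^ k) atTop (𝓝 0))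
    {v : Fin n → ℝ} (hv : Q.mulVec v ≤ v) : 0 ≤ v := by
  have hle : ∀ k : ℕ, (Q ^ k).mulVec v ≤ v := by
    intro k
    induction k with
    | zero => simp
    | succ k ih =>
      rw [pow_succ', ← Matrix.mulVec_mulVec]
      refine le_trans (fun i => ?_) hv
      simp only [Matrix.mulVec, dotProduct] at ih ⊢
      exact Finset.sum_le_sum fun j _ => mul_le_mul_of_nonneg_left (ih j) (hQ i j)
  have hlim : Tendsto (fun k : ℕ => (Q ^ k).mulVec v) atTop (𝓝 ((0 : Matrix _ _ ℝ).mulVec v)) :=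
    ((continuous_id.matrix_mulVec continuous_const).tendsto 0).comp hpow
  rw [Matrix.zero_mulVec] at hlim
  exact le_of_tendsto' hlim hle

theorem exists_nonneg_preimage {n : ℕ} {Q : Matrix (Fin n) (Fin n) ℝ}
    (hQ : ∀ i j, 0 ≤ Q i j) (hpow : Tendsto (fun k : ℕ => Q ^ k) atTop (𝓝 0))
    {b : Fin n → ℝ} (hb : 0 ≤ b) : ∃ v : Fin n → ℝ, 0 ≤ v ∧ (1 - Q).mulVec v = b := by
  have hinj : Function.Injective (Matrix.mulVecLin (1 - Q)) := by
    rw [← LinearMap.ker_eq_bot, LinearMap.ker_eq_bot']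
    intro x hx
    rw [Matrix.mulVecLin_apply, Matrix.sub_mulVec, Matrix.one_mulVec, sub_eq_zero] at hx
    have h1 : 0 ≤ x := nonneg_of_mulVec_le hQ hpow hx.symm.le
    have h2 : 0 ≤ -x := nonneg_of_mulVec_le hQ hpow (by rw [Matrix.mulVec_neg, ← hx])
    exact le_antisymm (neg_nonneg.mp h2) h1
  obtain ⟨v, hv⟩ := LinearMap.injective_iff_surjective.mp hinj b
  rw [Matrix.mulVecLin_apply] at hv
  refine ⟨v, nonneg_of_mulVec_le hQ hpow ?_, hv⟩
  rw [Matrix.sub_mulVec, Matrix.one_mulVec] at hv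
  exact sub_nonneg.mp (hv ▸ hb)

/-- A Stieltjes function whose measure gives no mass to the times before `t` at which it exceeds
`m` stays below `m` at `t`, provided it is at most `m` at some point. -/
theorem StieltjesFunction.le_of_measure_superlevel (F : StieltjesFunction ℝ) {m t x : ℝ}
    (hx : F x ≤ m) (h0 : F.measure {s | s ≤ t ∧ m < F s} = 0) : F t ≤ m := by
  by_contra! hlt
  set A : Set ℝ := {s | s ≤ t ∧ m < F s} with hA
  have hne : A.Nonempty := ⟨t, le_rfl, hlt⟩
  have hbdd : BddBelow A := by
    refine ⟨x, fun s hs => ?_⟩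
    by_contra! hsx
    exact absurd (F.mono hsx.le) (not_le.mpr (hx.trans_lt hs.2))
  set u := sInf A with hu
  have hIoc : ∀ s, u < s → m < F s := by
    intro s hs
    obtain ⟨r, hr, hrs⟩ := exists_lt_of_csInf_lt hne hs
    exact hr.2.trans_le (F.mono hrs.le)
  have hut : u ≤ t := csInf_le hbdd ⟨le_rfl, hlt⟩
  by_cases hum : m < F u
  · have hsub : Set.Icc u t ⊆ A := fun s hs => ⟨hs.2, hum.trans_le (F.mono hs.1)⟩
    have hz := measure_mono_null hsub h0
    rw [F.measure_Icc, ENNReal.ofReal_eq_zero] at hz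
    have hleft : Function.leftLim F u ≤ m := by
      refine le_of_tendsto (F.mono.tendsto_leftLim u) ?_
      filter_upwards [self_mem_nhdsWithin] with s hs
      by_contra! hms
      exact absurd (csInf_le hbdd ⟨(le_of_lt hs).trans hut, hms⟩) (not_le.mpr hs)
    linarith
  · have hsub : Set.Ioc u t ⊆ A := fun s hs => ⟨hs.2, hIoc s hs.1⟩
    have hz := measure_mono_null hsub h0
    rw [F.measure_Ioc, ENNReal.ofReal_eq_zero] at hz
    linarith

theorem monotone_extZero {f : ℝ → ℝ} (h0 : ∀ t, 0 ≤ t → 0 ≤ f t)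
    (hm : MonotoneOn f (Set.Ici 0)) : Monotone (extZero f) := by
  intro s t hst
  unfold extZero
  split_ifs with hs ht ht
  · exact le_rfl
  · exact h0 t (not_lt.mp ht)
  · exact absurd (hst.trans_lt ht) hs
  · exact hm (not_lt.mp hs) (not_lt.mp ht) hst

theorem rightCont_extZero {f : ℝ → ℝ}
    (hr : ∀ t, 0 ≤ t → ContinuousWithinAt f (Set.Ici t) t) (t : ℝ) :
    ContinuousWithinAt (extZero f) (Set.Ici t) t := by
  rcases lt_or_ge t 0 with ht | ht
  · have : extZero f =ᶠ[𝓝 t] fun _ => 0 := by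
      filter_upwards [Iio_mem_nhds ht] with s hs
      exact if_pos hs
    exact (continuousAt_const.congr this.symm).continuousWithinAt
  · exact (hr t ht).congr (fun s hs => if_neg (not_lt.mpr (ht.trans hs)))
      (if_neg (not_lt.mpr ht))

/-- The one-dimensional barrier: if `W` is positive whenever the regulator `L` exceeds a level
`m ≥ 0` on `[0, t]`, then `L t ≤ m`. -/
theorem le_of_flat {L W : ℝ → ℝ} (h0 : ∀ t, 0 ≤ t → 0 ≤ L t)
    (hm : MonotoneOn L (Set.Ici 0))
    (hr : ∀ t, 0 ≤ t → ContinuousWithinAt L (Set.Ici t) t)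
    (hflat : lsMeasure (extZero L) {t : ℝ | 0 ≤ t ∧ 0 < W t} = 0)
    {m t : ℝ} (hm0 : 0 ≤ m) (ht : 0 ≤ t)
    (hW : ∀ s, 0 ≤ s → s ≤ t → m < L s → 0 < W s) : L t ≤ m := by
  have hF : Monotone (extZero L) ∧ ∀ x, ContinuousWithinAt (extZero L) (Set.Ici x) x :=
    ⟨monotone_extZero h0 hm, rightCont_extZero hr⟩
  rw [lsMeasure, dif_pos hF] at hflat
  have hneg : ∀ s < 0, extZero L s = 0 := fun s hs => if_pos hs
  have hpos : ∀ s, 0 ≤ s → extZero L s = L s := fun s hs => if_neg (not_lt.mpr hs)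
  rw [← hpos t ht]
  refine StieltjesFunction.le_of_measure_superlevel ⟨extZero L, hF.1, hF.2⟩ (x := -1) ?_
    (measure_mono_null ?_ hflat)
  · change extZero L (-1) ≤ m
    rwa [hneg _ (by norm_num)]
  · rintro s ⟨hst, hs⟩
    change m < extZero L s at hs
    have hs0 : 0 ≤ s := by
      by_contra! hs0
      rw [hneg s hs0] at hs
      linarith
    rw [hpos s hs0] at hs
    exact ⟨hs0, hW s hs0 hst hs⟩

/-- Minimality of the regulator among nonnegative nondecreasing `K` with `Y + R K ≥ 0`. -/
theorem regulator_le {n : ℕ} {Q : Matrix (Fin n) (Fin n) ℝ}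
    (hQ : ∀ i j, 0 ≤ Q i j) (hpow : Tendsto (fun k : ℕ => Q ^ k) atTop (𝓝 0))
    {Y W L K : ℝ → Fin n → ℝ} (hS : IsSolutionPair (1 - Q) Y W L)
    (hK0 : ∀ i t, 0 ≤ t → 0 ≤ K t i)
    (hKm : ∀ i, MonotoneOn (fun t => K t i) (Set.Ici (0 : ℝ)))
    (hYK : ∀ t, 0 ≤ t → 0 ≤ Y t + (1 - Q).mulVec (K t))
    {t : ℝ} (ht : 0 ≤ t) : L t ≤ K t := by
  let D : Fin n → ℝ := fun j => sSup ((fun s => max 0 (L s j - K s j)) '' Set.Icc 0 t)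
  have hbdd : ∀ j, BddAbove ((fun s => max 0 (L s j - K s j)) '' Set.Icc 0 t) := by
    intro j
    refine ⟨L t j, ?_⟩
    rintro _ ⟨s, hs, rfl⟩
    have h1 : L s j ≤ L t j := hS.monoL j hs.1 ht hs.2
    exact max_le (hS.nonnegL j t ht) (by linarith [hK0 j s hs.1])
  have hmax : ∀ j s, 0 ≤ s → s ≤ t → max 0 (L s j - K s j) ≤ D j := fun j s h1 h2 =>
    le_csSup (hbdd j) ⟨s, ⟨h1, h2⟩, rfl⟩
  have hD0 : ∀ j, 0 ≤ D j := fun j => (le_max_left _ _).trans (hmax j t ht le_rfl)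
  have hQD0 : ∀ j, 0 ≤ Q.mulVec D j := fun j => by
    simp only [Matrix.mulVec, dotProduct]
    exact Finset.sum_nonneg fun k _ => mul_nonneg (hQ j k) (hD0 k)
  have key : ∀ j s, 0 ≤ s → s ≤ t → L s j ≤ K s j + Q.mulVec D j := by
    intro j s hs hst
    refine le_of_flat (hS.nonnegL j) (hS.monoL j) (hS.rcL j) (hS.flat j)
      (add_nonneg (hK0 j s hs) (hQD0 j)) hs ?_
    intro r hr hrs hlt
    have h1 := congrFun (hS.eqn r hr) j
    have h2 := hYK r hr j
    have h3 : K r j ≤ K s j := hKm j hr hs hrs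
    have h4 : Q.mulVec (L r) j - Q.mulVec (K r) j ≤ Q.mulVec D j := by
      rw [← Pi.sub_apply, ← Matrix.mulVec_sub]
      simp only [Matrix.mulVec, dotProduct]
      exact Finset.sum_le_sum fun k _ => mul_le_mul_of_nonneg_left
        ((le_max_right _ _).trans (hmax k r hr (hrs.trans hst))) (hQ j k)
    simp only [Matrix.sub_mulVec, Matrix.one_mulVec, Pi.add_apply, Pi.sub_apply,
      Pi.zero_apply] at h1 h2
    linarith
  have hDQ : D ≤ Q.mulVec D := by
    intro j
    refine csSup_le ⟨_, t, ⟨ht, le_rfl⟩, rfl⟩ ?_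
    rintro _ ⟨s, hs, rfl⟩
    exact max_le (hQD0 j) (by linarith [key j s hs.1 hs.2])
  have hneg : 0 ≤ -D := nonneg_of_mulVec_le hQ hpow
    (by rw [Matrix.mulVec_neg]; exact neg_le_neg hDQ)
  intro j
  have h1 := (le_max_right _ _).trans (hmax j t ht le_rfl)
  have h2 : 0 ≤ -D j := hneg j
  linarith

/-- If L_i diverges for some nonnegative initial shift a, it diverges for every
nonnegative initial shift b. -/
theorem skorohod_regulator_divergence_transfer
    {n : ℕ} (hn : 0 < n) (P : Matrix (Fin n) (Fin n) ℝ)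
    (hPnonneg : ∀ i j, 0 ≤ P i j)
    (hPpow : Filter.Tendsto (fun k : ℕ => P ^ k) Filter.atTop (nhds 0))
    (X : ℝ → Fin n → ℝ) (hX : Cadlag X) (i : Fin n)
    (hexist : ∀ c : Fin n → ℝ, 0 ≤ c →
      ∃ W L : ℝ → Fin n → ℝ, IsSolutionPair (1 - P.transpose) (fun t => c + X t) W L)
    (hsome : ∃ (a : Fin n → ℝ) (Wa La : ℝ → Fin n → ℝ), 0 ≤ a ∧
      IsSolutionPair (1 - P.transpose) (fun t => a + X t) Wa La ∧
      Filter.Tendsto (fun t => La t i) Filter.atTop Filter.atTop) :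
    ∀ (b : Fin n → ℝ) (Wb Lb : ℝ → Fin n → ℝ), 0 ≤ b →
      IsSolutionPair (1 - P.transpose) (fun t => b + X t) Wb Lb →
      Filter.Tendsto (fun t => Lb t i) Filter.atTop Filter.atTop := by
  intro b Wb Lb hb hSb
  obtain ⟨a, Wa, La, ha, hSa, hlim⟩ := hsome
  have hQ : ∀ i j, 0 ≤ P.transpose i j := fun i j => hPnonneg j i
  have hQpow : Tendsto (fun k : ℕ => P.transpose ^ k) atTop (𝓝 0) := by
    have h := (continuous_id.matrix_transpose.tendsto (0 : Matrix (Fin n) (Fin n) ℝ)).comp hPpow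
    simpa [Function.comp_def, Matrix.transpose_pow] using h
  obtain ⟨v, hv0, hv⟩ := exists_nonneg_preimage hQ hQpow hb
  have hle : ∀ t, 0 ≤ t → La t ≤ Lb t + v := by
    intro t ht
    refine regulator_le (K := fun s => Lb s + v) hQ hQpow hSa ?_ ?_ ?_ ht
    · exact fun j s hs => add_nonneg (hSb.nonnegL j s hs) (hv0 j)
    · exact fun j s hs r hr hsr => add_le_add_left (hSb.monoL j hs hr hsr) (v j)
    · intro s hs
      have hW : 0 ≤ Wb s := fun j => hSb.nonnegW j s hs
      have heq : a + X s + (1 - P.transpose).mulVec (Lb s + v) = a + Wb s := by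
        rw [Matrix.mulVec_add, hv, hSb.eqn s hs]
        abel
      exact heq ▸ add_nonneg ha hW
  refine tendsto_atTop_mono' atTop ?_ (tendsto_atTop_add_const_right atTop (-v i) hlim)
  filter_upwards [eventually_ge_atTop (0 : ℝ)] with t ht
  have h : La t i ≤ Lb t i + v i := hle t ht i
  linarith
end
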